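/- Let K be a field of characteristic zero, A_n(K) the Weyl algebra with a fixed partition of {1,…,n} into blocks of sizes n_1,…,n_p. Let M be a left A_n(K)-module generated by f_1,…,f_m, E a free A_n(K)-module with free generators e_1,…,e_m, π: E → M the natural epimorphism (π(e_i) = f_i), N = Ker π, and G = {g_1,…,g_d} a Gröbner basis of N with respect to <_1,…,<_p. For (r_1,…,r_p) ∈ ℕ^p set M_{r_1,…,r_p} = Σ_{i=1}^m W_{r_1,…,r_p} f_i, let V_{r_1,…,r_p} be the set of terms u with ord_i u ≤ r_i (1 ≤ i ≤ p) such that u_g^{(1)} ∤ u for all g ∈ G, let V'_{r_1,…,r_p} be the set of terms u with ord_i u ≤ r_i not in V_{r_1,…,r_p} such that whenever u_g^{(1)} | u for some g ∈ G with θ = u/u_g^{(1)}, there exists i ∈ {2,…,p} with ord_i(θ) + ord_i(u_g^{(i)}) > r_i, and let U_{r_1,…,r_p} = V_{r_1,…,r_p} ∪ V'_{r_1,…,r_p}. Then for every (r_1,…,r_p) ∈ ℕ^p, the set π(U_{r_1,…,r_p}) is a basis of the K-vector space M_{r_1,…,r_p}. -/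

import Mathlib

set_option synthInstance.maxHeartbeats 400000
set_option maxHeartbeats 1000000

open MvPolynomial

noncomputable def weylGens (n : ℕ) (K : Type) [Field K] :
    Set (Module.End K (MvPolynomial (Fin n) K)) :=
  (Set.range fun i : Fin n =>
      (LinearMap.mulLeft K (X i : MvPolynomial (Fin n) K) : Module.End K (MvPolynomial (Fin n) K))) ∪
  (Set.range fun i : Fin n => ((pderiv i).toLinearMap : Module.End K (MvPolynomial (Fin n) K)))

noncomputable def WeylAlg (n : ℕ) (K : Type) [Field K] :
    Subalgebra K (Module.End K (MvPolynomial (Fin n) K)) :=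
  Algebra.adjoin K (weylGens n K)

noncomputable def wx (n : ℕ) (K : Type) [Field K] (i : Fin n) : WeylAlg n K :=
  ⟨LinearMap.mulLeft K (X i), Algebra.subset_adjoin (Set.mem_union_left _ ⟨i, rfl⟩)⟩

noncomputable def wd (n : ℕ) (K : Type) [Field K] (i : Fin n) : WeylAlg n K :=
  ⟨(pderiv i).toLinearMap, Algebra.subset_adjoin (Set.mem_union_right _ ⟨i, rfl⟩)⟩

noncomputable def wMono (n : ℕ) (K : Type) [Field K] (α β : Fin n → ℕ) : WeylAlg n K :=
  (((List.finRange n).map fun i => wx n K i ^ α i).prod) *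
  (((List.finRange n).map fun i => wd n K i ^ β i).prod)

def ordTot (n : ℕ) (α β : Fin n → ℕ) : ℕ := (∑ i, α i) + ∑ i, β i

noncomputable def bernW (n : ℕ) (K : Type) [Field K] (r : ℤ) : Submodule K (WeylAlg n K) :=
  Submodule.span K {D | ∃ α β : Fin n → ℕ, (ordTot n α β : ℤ) ≤ r ∧ D = wMono n K α β}

noncomputable def modFil (n : ℕ) (K : Type) [Field K] (M : Type) [AddCommGroup M]
    [Module K M] [Module (WeylAlg n K) M] (m : ℕ) (g : Fin m → M) (r : ℤ) :
    Submodule K M :=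
  Submodule.span K {x | ∃ i, ∃ D ∈ bernW n K r, x = D • g i}


/-- The `j`-th order of the monomial `x^α ∂^β` with respect to the partition `B`. -/
def ordBlk {n p : ℕ} (B : Fin n → Fin p) (α β : Fin n → ℕ) (j : Fin p) : ℕ :=
  ∑ i ∈ Finset.univ.filter (fun i => B i = j), (α i + β i)

/-- An exponent pair `(α, β)` encoding the monomial `x^α ∂^β`. -/
abbrev WExp (n : ℕ) := (Fin n → ℕ) × (Fin n → ℕ)

/-- A term `θ e_i` of the free module `E`: a monomial together with the index of a
free generator. -/
abbrev WTerm (n m : ℕ) := WExp n × Fin m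

/-- The `j`-th order of a term. -/
def ordT {n p m : ℕ} (B : Fin n → Fin p) (j : Fin p) (t : WTerm n m) : ℕ :=
  ordBlk B t.1.1 t.1.2 j

/-- The comparison vector of a monomial used to define the order `<_j`:
the `j`-th order, then the other orders, then the exponents of the `j`-th block,
then the remaining exponents. -/
def keyList {n p : ℕ} (B : Fin n → Fin p) (j : Fin p) (t : WExp n) : List ℕ :=
  [ordBlk B t.1 t.2 j] ++
  (((List.finRange p).filter fun k => k ≠ j).map (ordBlk B t.1 t.2)) ++
  (((List.finRange n).filter fun i => B i = j).map t.1) ++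
  (((List.finRange n).filter fun i => B i = j).map t.2) ++
  ((((List.finRange n).filter fun i => B i ≠ j).map fun i => [t.1 i, t.2 i]).flatten)

/-- The order `<_j` on monomials. -/
def monLt {n p : ℕ} (B : Fin n → Fin p) (j : Fin p) (s t : WExp n) : Prop :=
  List.Lex (· < ·) (keyList B j s) (keyList B j t)

/-- The order `<_j` on terms of the free module. -/
def termLt {n p m : ℕ} (B : Fin n → Fin p) (j : Fin p) (s t : WTerm n m) : Prop :=
  monLt B j s.1 t.1 ∨ (s.1 = t.1 ∧ s.2 < t.2)

/-- Divisibility of terms: same free generator and componentwise smaller exponents. -/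
def tdvd {n m : ℕ} (s t : WTerm n m) : Prop :=
  s.2 = t.2 ∧ s.1.1 ≤ t.1.1 ∧ s.1.2 ≤ t.1.2

/-- The quotient monomial `t/s` of two terms with `s ∣ t`. -/
def tquot {n m : ℕ} (t s : WTerm n m) : WExp n :=
  (t.1.1 - s.1.1, t.1.2 - s.1.2)

/-- The element `θ e_i` of the free module `E = A_n(K)^m`. -/
noncomputable def termVal {n m : ℕ} (K : Type) [Field K] (t : WTerm n m) :
    Fin m → WeylAlg n K :=
  Pi.single t.2 (wMono n K t.1.1 t.1.2)

/-- `c` is the coefficient expansion of `f ∈ E` in the basis of terms. -/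
def Represents {n m : ℕ} {K : Type} [Field K] (c : WTerm n m →₀ K)
    (f : Fin m → WeylAlg n K) : Prop :=
  f = c.sum fun t a => a • termVal K t

/-- `u` is the `j`-th leader of the element represented by `c`: the greatest term
appearing in it with respect to `<_j`. -/
def IsLeader {n p m : ℕ} {K : Type} [Field K] (B : Fin n → Fin p) (j : Fin p)
    (c : WTerm n m →₀ K) (u : WTerm n m) : Prop :=
  u ∈ c.support ∧ ∀ t ∈ c.support, t ≠ u → termLt B j t u

/-- `ρ(g) ∣ ρ(f)`, where `u g`, `u f` are the leaders of `g` and `f`: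
the first leaders divide and `d_j(g) ≤ d_j(f)` for all `j`. -/
def rhoDvd {n p m : ℕ} (B : Fin n → Fin p) (hp : 0 < p)
    (ug uf : Fin p → WTerm n m) : Prop :=
  tdvd (ug ⟨0, hp⟩) (uf ⟨0, hp⟩) ∧
  ∀ j, (ordT B j (ug j) : ℤ) - (ordT B j (ug ⟨0, hp⟩) : ℤ) ≤
       (ordT B j (uf j) : ℤ) - (ordT B j (uf ⟨0, hp⟩) : ℤ)

/-- One-step `(<_k, <_{i₁}, …, <_{i_l})`-reduction of `f` to `h` modulo `g`, where `cg`
is the expansion of `g` and `ug j` its `j`-th leader. -/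
def RedStep {n p m : ℕ} {K : Type} [Field K] (B : Fin n → Fin p)
    (k : Fin p) (is : List (Fin p))
    (g : Fin m → WeylAlg n K) (cg : WTerm n m →₀ K) (ug : Fin p → WTerm n m)
    (f h : Fin m → WeylAlg n K) : Prop :=
  ∃ cf : WTerm n m →₀ K, Represents cf f ∧
    ∃ w ∈ cf.support, tdvd (ug k) w ∧
      (∀ i ∈ is, ∀ uf : WTerm n m, IsLeader B i cf uf →
        ordBlk B (tquot w (ug k)).1 (tquot w (ug k)).2 i + ordT B i (ug i) ≤
          ordT B i uf) ∧
      h = f - (cf w * (cg (ug k))⁻¹) •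
        fun j => wMono n K (tquot w (ug k)).1 (tquot w (ug k)).2 * g j

/-- The element represented by `cf` is `(<_k, <_{i₁}, …, <_{i_l})`-reduced with respect to an
element with leaders `ug`. -/
def ReducedWrt {n p m : ℕ} {K : Type} [Field K] (B : Fin n → Fin p)
    (k : Fin p) (is : List (Fin p))
    (cf : WTerm n m →₀ K) (ug : Fin p → WTerm n m) : Prop :=
  ∀ w ∈ cf.support, tdvd (ug k) w →
    ∃ i ∈ is, ∃ uf : WTerm n m, IsLeader B i cf uf ∧
      ordT B i uf <
        ordBlk B (tquot w (ug k)).1 (tquot w (ug k)).2 i + ordT B i (ug i)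

/-- The component `W_{r_1,…,r_p}` of the `p`-dimensional filtration of the Weyl algebra. -/
noncomputable def bernWB (n p : ℕ) (K : Type) [Field K] (B : Fin n → Fin p)
    (r : Fin p → ℤ) : Submodule K (WeylAlg n K) :=
  Submodule.span K
    {D | ∃ α β : Fin n → ℕ, (∀ j, (ordBlk B α β j : ℤ) ≤ r j) ∧ D = wMono n K α β}

/-- The component `M_{r_1,…,r_p} = Σ_i W_{r_1,…,r_p} g_i` of the induced filtration of `M`. -/
noncomputable def modFilB (n p : ℕ) (K : Type) [Field K] (B : Fin n → Fin p)
    (M : Type) [AddCommGroup M] [Module K M] [Module (WeylAlg n K) M]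
    (m : ℕ) (g : Fin m → M) (r : Fin p → ℤ) : Submodule K M :=
  Submodule.span K {x | ∃ i, ∃ D ∈ bernWB n p K B r, x = D • g i}

/-!
Left multiplication by `x^α ∂^β` acts on monomials like multiplication in the commutative monoid of
exponents, up to proper divisors of the product. Hence the leaders of `θ g` are the products of `θ`
with the leaders of `g`, and a bounded term divisible by the first leader of some `g ∈ G` within the
bounds is congruent modulo `N` to a combination of bounded terms that are smaller for `<_1`. There
are finitely many bounded terms, so by induction the irreducible ones span. Conversely, monomials
are linearly independent in characteristic zero, so a linear relation among the images of
irreducible terms comes from a nonzero element of `N`. Its leaders are divisible by those of some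
`g ∈ G`, which forces its first leader, an irreducible term, to be reducible within the bounds.
-/

section Generalities

/-- The functional `L i` isolates the coefficient of a minimal index `i` in a linear relation. -/
theorem linearIndependent_of_triangular {ι R M : Type*} [PartialOrder ι] [Ring R] [NoZeroDivisors R]
    [AddCommGroup M] [Module R M] {v : ι → M} (L : ι → M →ₗ[R] R) (hdiag : ∀ i, L i (v i) ≠ 0)
    (htri : ∀ i j, ¬ j ≤ i → L i (v j) = 0) : LinearIndependent R v := by
  rw [linearIndependent_iff]
  intro c hc
  by_contra hne
  obtain ⟨i, hi, hmin⟩ := c.support.exists_minimal (Finsupp.support_nonempty_iff.2 hne)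
  have hvanish : ∀ j ∈ c.support, j ≠ i → c j • L i (v j) = 0 := fun j hj hji => by
    rw [htri i j fun hle => hji (hle.antisymm (hmin hj hle)), smul_zero]
  have hrel := congrArg (L i) hc
  rw [Finsupp.linearCombination_apply, map_finsuppSum, map_zero, Finsupp.sum] at hrel
  simp only [map_smul] at hrel
  rw [Finset.sum_eq_single_of_mem i hi hvanish] at hrel
  exact mul_ne_zero (Finsupp.mem_support_iff.1 hi) (hdiag i) hrel

theorem linearIndepOn_map_of_forall_mem_span {ι R E M : Type*} [Ring R] [AddCommMonoid E]
    [Module R E] [AddCommGroup M] [Module R M] {v : ι → E} (hv : LinearIndependent R v)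
    (φ : E →ₗ[R] M) {s : Set ι} (h : ∀ x ∈ Submodule.span R (v '' s), x ≠ 0 → φ x ≠ 0) :
    LinearIndepOn R (fun i => φ (v i)) s := by
  rw [linearIndepOn_iff]
  intro c hc hrel
  by_contra hne
  refine h (Finsupp.linearCombination R v c)
    ((Finsupp.mem_span_image_iff_linearCombination R).2 ⟨c, hc, rfl⟩)
    (fun hzero => hne (hv (hzero.trans (map_zero _).symm))) ?_
  rw [← hrel, Finsupp.apply_linearCombination]
  rfl

theorem lex_map_add_left_iff {M N : Type*} [AddZeroClass M] [AddCommMonoid N] [PartialOrder N]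
    [IsOrderedCancelAddMonoid N] (F : List (M →+ N)) (a b c : M) :
    List.Lex (· < ·) (F.map fun φ => φ (a + b)) (F.map fun φ => φ (a + c)) ↔
      List.Lex (· < ·) (F.map fun φ => φ b) (F.map fun φ => φ c) := by
  induction F with
  | nil => simp
  | cons φ F ih =>
    simp only [List.map_cons, List.cons_lex_cons_iff, ih]
    rw [map_add, map_add, add_lt_add_iff_left, add_right_inj]

theorem lex_map_of_forall_le {α β : Type*} [PartialOrder β] {F : List α} {x y : α → β}
    (hle : ∀ φ ∈ F, x φ ≤ y φ) (hne : F.map x ≠ F.map y) :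
    List.Lex (· < ·) (F.map x) (F.map y) := by
  induction F with
  | nil => simp at hne
  | cons φ F ih =>
    simp only [List.map_cons, List.cons_lex_cons_iff, List.forall_mem_cons] at hle ⊢
    refine hle.1.lt_or_eq.imp_right fun heq => ⟨heq, ih hle.2 fun htail => hne ?_⟩
    rw [List.map_cons, List.map_cons, heq, htail]

theorem addMonoidHom_apply_le_of_le {M N : Type*} [AddZeroClass M] [LE M] [ExistsAddOfLE M]
    [AddZeroClass N] [LE N] [CanonicallyOrderedAdd N] (φ : M →+ N) {a b : M} (h : a ≤ b) :
    φ a ≤ φ b := by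
  obtain ⟨c, rfl⟩ := exists_add_of_le h
  rw [map_add]
  exact le_self_add

end Generalities

section WeylMonomials

variable {n : ℕ} {K : Type} [Field K]

/-- The factor `x^α` of the monomial `x^α ∂^β`, so that `wMono n K α β = xPart K α * dPart K β`
holds by `rfl`. -/
noncomputable def xPart (K : Type) [Field K] (α : Fin n → ℕ) : WeylAlg n K :=
  ((List.finRange n).map fun i => wx n K i ^ α i).prod

/-- The factor `∂^β` of the monomial `x^α ∂^β`. -/
noncomputable def dPart (K : Type) [Field K] (β : Fin n → ℕ) : WeylAlg n K :=
  ((List.finRange n).map fun i => wd n K i ^ β i).prod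

/-- The monomials `x^α ∂^β` as a family indexed by exponent pairs. -/
noncomputable def weylMonomial (K : Type) [Field K] (θ : WExp n) : WeylAlg n K :=
  wMono n K θ.1 θ.2

theorem weylMonomial_eq (θ : WExp n) : weylMonomial K θ = xPart K θ.1 * dPart K θ.2 := rfl

theorem coe_xPart (α : Fin n → ℕ) :
    (xPart K α).1 = Algebra.lmul K _ (monomial (Finsupp.equivFunOnFinite.symm α) 1) := by
  have hwx : ∀ i, (wx n K i).1 = Algebra.lmul K _ (X i) := fun _ => rfl
  change (WeylAlg n K).val (xPart K α) = _
  rw [xPart, map_list_prod, List.map_map, monomial_eq, map_one, one_mul,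
    Finsupp.prod_fintype _ _ fun _ => pow_zero _, Fin.prod_univ_def, map_list_prod, List.map_map]
  congr 1
  refine List.map_congr_left fun i _ => ?_
  rw [Function.comp_apply, Function.comp_apply, map_pow, map_pow, ← hwx]
  rfl

theorem xPart_apply (α : Fin n → ℕ) (q : MvPolynomial (Fin n) K) :
    (xPart K α).1 q = monomial (Finsupp.equivFunOnFinite.symm α) 1 * q := by
  rw [coe_xPart]
  rfl

theorem wd_pow_monomial (i : Fin n) (k : ℕ) (γ : Fin n →₀ ℕ) (a : K) :
    (wd n K i ^ k).1 (monomial γ a) =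
      monomial (γ - Finsupp.single i k) (a * ((γ i).descFactorial k : K)) := by
  induction k with
  | zero => simp
  | succ k ih =>
    have hsucc : (wd n K i ^ (k + 1)).1 (monomial γ a) =
        pderiv i ((wd n K i ^ k).1 (monomial γ a)) := by rw [pow_succ']; rfl
    rw [hsucc, ih, pderiv_monomial, tsub_tsub, ← Finsupp.single_add, Nat.descFactorial_succ]
    simp only [Finsupp.tsub_apply, Finsupp.single_eq_same, Nat.cast_mul]
    rw [mul_assoc, mul_comm ((γ i).descFactorial k : K)]

theorem prod_wd_pow_monomial (β : Fin n → ℕ) {l : List (Fin n)} (hl : l.Nodup) (γ : Fin n →₀ ℕ)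
    (a : K) :
    (l.map fun i => wd n K i ^ β i).prod.1 (monomial γ a) =
      monomial (γ - (l.map fun i => Finsupp.single i (β i)).sum)
        (a * (l.map fun i => ((γ i).descFactorial (β i) : K)).prod) := by
  induction l with
  | nil => simp
  | cons b l ih =>
    obtain ⟨hb, hl⟩ := List.nodup_cons.1 hl
    have hsum : (l.map fun i => Finsupp.single i (β i)).sum b = 0 := by
      rw [← Finsupp.applyAddHom_apply, map_list_sum]
      refine List.sum_eq_zero fun x hx => ?_
      simp only [List.map_map, List.mem_map, Function.comp_apply] at hx
      obtain ⟨i, hi, rfl⟩ := hx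
      exact Finsupp.single_eq_of_ne fun h => hb (h ▸ hi)
    simp only [List.map_cons, List.prod_cons, List.sum_cons, MulMemClass.coe_mul,
      Module.End.mul_apply, ih hl, wd_pow_monomial, tsub_tsub, Finsupp.tsub_apply, hsum, tsub_zero]
    rw [add_comm (Finsupp.single b _), mul_assoc, mul_comm (List.prod _)]

theorem dPart_monomial (β : Fin n → ℕ) (γ : Fin n →₀ ℕ) (a : K) :
    (dPart K β).1 (monomial γ a) = monomial (γ - Finsupp.equivFunOnFinite.symm β)
      (a * ∏ i, ((γ i).descFactorial (β i) : K)) := by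
  rw [dPart, prod_wd_pow_monomial β (List.nodup_finRange n), ← Fin.sum_univ_def,
    ← Fin.prod_univ_def, Finsupp.equivFunOnFinite_symm_eq_sum]

theorem weylMonomial_apply_monomial (θ : WExp n) (γ : Fin n →₀ ℕ) (a : K) :
    (weylMonomial K θ).1 (monomial γ a) =
      monomial (Finsupp.equivFunOnFinite.symm θ.1 + (γ - Finsupp.equivFunOnFinite.symm θ.2))
        (a * ∏ i, ((γ i).descFactorial (θ.2 i) : K)) := by
  rw [weylMonomial_eq, MulMemClass.coe_mul, Module.End.mul_apply, dPart_monomial, xPart_apply,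
    monomial_mul, one_mul]

theorem wx_mul_xPart (i : Fin n) (α : Fin n → ℕ) :
    wx n K i * xPart K α = xPart K (Pi.single i 1 + α) := by
  refine Subtype.ext (LinearMap.ext fun q => ?_)
  have hexp : Finsupp.equivFunOnFinite.symm (Pi.single i 1 + α) =
      Finsupp.single i 1 + Finsupp.equivFunOnFinite.symm α := by
    ext j; simp [Finsupp.single_apply, Pi.single_apply, eq_comm]
  have hwx : (wx n K i * xPart K α).1 q = X i * (xPart K α).1 q := rfl
  rw [hwx, xPart_apply, xPart_apply, hexp, ← mul_assoc, X, monomial_mul, one_mul]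

theorem wd_mul_dPart (i : Fin n) (β : Fin n → ℕ) :
    wd n K i * dPart K β = dPart K (Pi.single i 1 + β) := by
  refine Subtype.ext (MvPolynomial.linearMap_ext fun γ => LinearMap.ext fun a => ?_)
  have hexp : γ - Finsupp.equivFunOnFinite.symm β - Finsupp.single i 1 =
      γ - Finsupp.equivFunOnFinite.symm (Pi.single i 1 + β) := by
    ext j
    simp [Finsupp.single_apply, Pi.single_apply, eq_comm, tsub_tsub, add_comm]
  have hcoeff : (∏ j, ((γ j).descFactorial (β j) : K)) * ((γ i - β i : ℕ) : K) =
      ∏ j, ((γ j).descFactorial ((Pi.single i 1 + β : Fin n → ℕ) j) : K) := by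
    rw [← Finset.prod_erase_mul _ _ (Finset.mem_univ i),
      ← Finset.prod_erase_mul _ _ (Finset.mem_univ i), mul_assoc]
    congr 1
    · refine Finset.prod_congr rfl fun j hj => ?_
      simp [Finset.ne_of_mem_erase hj]
    · simp [add_comm 1, Nat.descFactorial_succ, mul_comm]
  have hwd : (wd n K i * dPart K β).1 (monomial γ a) =
      pderiv i ((dPart K β).1 (monomial γ a)) := rfl
  change (wd n K i * dPart K β).1 (monomial γ a) = (dPart K _).1 (monomial γ a)
  rw [hwd, dPart_monomial, dPart_monomial, pderiv_monomial, hexp, ← hcoeff, ← mul_assoc]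
  rfl

theorem wd_mul_xPart (i : Fin n) (α : Fin n → ℕ) :
    wd n K i * xPart K α = xPart K α * wd n K i + (α i : K) • xPart K (α - Pi.single i 1) := by
  refine Subtype.ext (LinearMap.ext fun q => ?_)
  have hexp : Finsupp.equivFunOnFinite.symm α - Finsupp.single i 1 =
      Finsupp.equivFunOnFinite.symm (α - Pi.single i 1) := by
    ext j; simp [Finsupp.single_apply, Pi.single_apply, eq_comm]
  have hl : (wd n K i * xPart K α).1 q = pderiv i ((xPart K α).1 q) := rfl
  have hr : (xPart K α * wd n K i + (α i : K) • xPart K (α - Pi.single i 1)).1 q =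
      (xPart K α).1 (pderiv i q) + (α i : K) • (xPart K (α - Pi.single i 1)).1 q := rfl
  rw [hl, hr, xPart_apply, xPart_apply, xPart_apply, pderiv_mul, pderiv_monomial, hexp, add_comm,
    one_mul, ← smul_mul_assoc, smul_monomial, smul_eq_mul, mul_one,
    Finsupp.equivFunOnFinite_symm_apply_apply]

theorem wx_mul_weylMonomial (i : Fin n) (θ : WExp n) :
    wx n K i * weylMonomial K θ = weylMonomial K ((Pi.single i 1, 0) + θ) := by
  rw [weylMonomial_eq, weylMonomial_eq, ← mul_assoc, wx_mul_xPart, Prod.fst_add, Prod.snd_add,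
    zero_add]

theorem wd_mul_weylMonomial (i : Fin n) (θ : WExp n) :
    wd n K i * weylMonomial K θ = weylMonomial K ((0, Pi.single i 1) + θ) +
      (θ.1 i : K) • weylMonomial K (θ.1 - Pi.single i 1, θ.2) := by
  simp only [weylMonomial_eq, Prod.fst_add, Prod.snd_add, zero_add]
  rw [← mul_assoc, wd_mul_xPart, add_mul, mul_assoc, wd_mul_dPart, smul_mul_assoc]

/-- The functional `D ↦ [x^α] D(x^β)`, which separates `x^α ∂^β` from the monomials
`x^α' ∂^β'` that do not divide it. -/
noncomputable def weylCoeff (K : Type) [Field K] (θ : WExp n) : WeylAlg n K →ₗ[K] K :=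
  lcoeff K (Finsupp.equivFunOnFinite.symm θ.1) ∘ₗ
    LinearMap.applyₗ (monomial (Finsupp.equivFunOnFinite.symm θ.2) 1) ∘ₗ
      (WeylAlg n K).val.toLinearMap

theorem weylCoeff_weylMonomial (θ η : WExp n) :
    weylCoeff K θ (weylMonomial K η) =
      if Finsupp.equivFunOnFinite.symm η.1 + (Finsupp.equivFunOnFinite.symm θ.2 -
        Finsupp.equivFunOnFinite.symm η.2) = Finsupp.equivFunOnFinite.symm θ.1
      then ∏ i, ((θ.2 i).descFactorial (η.2 i) : K) else 0 := by
  have hcoeff : weylCoeff K θ (weylMonomial K η) = coeff (Finsupp.equivFunOnFinite.symm θ.1)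
      ((weylMonomial K η).1 (monomial (Finsupp.equivFunOnFinite.symm θ.2) 1)) := rfl
  rw [hcoeff, weylMonomial_apply_monomial, coeff_monomial, one_mul]
  rfl

theorem weylCoeff_weylMonomial_self_ne_zero [CharZero K] (θ : WExp n) :
    weylCoeff K θ (weylMonomial K θ) ≠ 0 := by
  rw [weylCoeff_weylMonomial, tsub_self, add_zero, if_pos rfl, Finset.prod_ne_zero_iff]
  intro i _
  rw [Nat.descFactorial_self, Nat.cast_ne_zero]
  exact Nat.factorial_ne_zero _

theorem weylCoeff_weylMonomial_of_not_le {θ η : WExp n} (h : ¬ η ≤ θ) :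
    weylCoeff K θ (weylMonomial K η) = 0 := by
  rw [weylCoeff_weylMonomial, ite_eq_right_iff]
  intro heq
  have hfst : η.1 ≤ θ.1 := fun i => by
    rw [← Finsupp.equivFunOnFinite_symm_apply_apply θ.1, ← heq]
    exact Nat.le_add_right _ _
  obtain ⟨i, hi⟩ := not_forall.1 fun hsnd => h ⟨hfst, hsnd⟩
  refine Finset.prod_eq_zero (Finset.mem_univ i) ?_
  rw [Nat.descFactorial_of_lt (not_le.1 hi), Nat.cast_zero]

theorem linearIndependent_weylMonomial [CharZero K] :
    LinearIndependent K (weylMonomial K : WExp n → WeylAlg n K) := by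
  have htri := linearIndependent_of_triangular (v := (weylMonomial K : WExp n → WeylAlg n K))
    (weylCoeff K)
  exact htri weylCoeff_weylMonomial_self_ne_zero fun _ _ => weylCoeff_weylMonomial_of_not_le

end WeylMonomials

section Symbols

variable {n : ℕ} {K : Type} [Field K]

/-- The span of the monomials that properly divide the monomial with exponents `t`. -/
noncomputable def lowerSpan (K : Type) [Field K] (t : WExp n) : Submodule K (WeylAlg n K) :=
  Submodule.span K (weylMonomial K '' Set.Iio t)

/-- `D` acts on monomials, modulo proper divisors of the product, as the commutative monomial
with exponents `θ`. -/
def HasSymbol (D : WeylAlg n K) (θ : WExp n) : Prop :=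
  ∀ s, ∃ x ∈ lowerSpan K (θ + s), D * weylMonomial K s = weylMonomial K (θ + s) + x

theorem lowerSpan_mono {s t : WExp n} (h : s ≤ t) : lowerSpan K s ≤ lowerSpan K t :=
  Submodule.span_mono (Set.image_mono (Set.Iio_subset_Iio h))

theorem weylMonomial_mem_lowerSpan {s t : WExp n} (h : s < t) :
    weylMonomial K s ∈ lowerSpan K t :=
  Submodule.subset_span ⟨s, h, rfl⟩

namespace HasSymbol

variable {D D' : WeylAlg n K} {θ θ' : WExp n}

theorem mul_mem_lowerSpan (hD : HasSymbol D θ) {s : WExp n} {x : WeylAlg n K}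
    (hx : x ∈ lowerSpan K s) : D * x ∈ lowerSpan K (θ + s) := by
  induction hx using Submodule.span_induction with
  | mem x hx =>
    obtain ⟨t, ht, rfl⟩ := hx
    have hlt : θ + t < θ + s := add_lt_add_right ht θ
    obtain ⟨y, hy, heq⟩ := hD t
    rw [heq]
    exact add_mem (weylMonomial_mem_lowerSpan hlt) (lowerSpan_mono hlt.le hy)
  | zero => rw [mul_zero]; exact zero_mem _
  | add x y _ _ hx hy => rw [mul_add]; exact add_mem hx hy
  | smul a x _ hx => rw [mul_smul_comm]; exact Submodule.smul_mem _ a hx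

theorem one : HasSymbol (1 : WeylAlg n K) 0 := fun s =>
  ⟨0, zero_mem _, by rw [one_mul, zero_add, add_zero]⟩

theorem mul (hD : HasSymbol D θ) (hD' : HasSymbol D' θ') : HasSymbol (D * D') (θ + θ') := by
  intro s
  obtain ⟨x', hx', heq'⟩ := hD' s
  obtain ⟨x, hx, heq⟩ := hD (θ' + s)
  rw [add_assoc]
  exact ⟨x + D * x', add_mem hx (hD.mul_mem_lowerSpan hx'),
    by rw [mul_assoc, heq', mul_add, heq, add_assoc]⟩

theorem pow (hD : HasSymbol D θ) (k : ℕ) : HasSymbol (D ^ k) (k • θ) := by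
  induction k with
  | zero => rw [pow_zero, zero_smul]; exact one
  | succ k ih => rw [pow_succ, succ_nsmul]; exact ih.mul hD

theorem list_prod {ι : Type*} (l : List ι) {D : ι → WeylAlg n K} {θ : ι → WExp n}
    (h : ∀ i, HasSymbol (D i) (θ i)) : HasSymbol (l.map D).prod (l.map θ).sum := by
  induction l with
  | nil => exact one
  | cons i l ih =>
    rw [List.map_cons, List.map_cons, List.prod_cons, List.sum_cons]
    exact (h i).mul ih

end HasSymbol

theorem hasSymbol_wx (i : Fin n) : HasSymbol (wx n K i) (Pi.single i 1, 0) := fun s =>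
  ⟨0, zero_mem _, by rw [wx_mul_weylMonomial, add_zero]⟩

theorem hasSymbol_wd (i : Fin n) : HasSymbol (wd n K i) (0, Pi.single i 1) := fun s => by
  refine ⟨_, Submodule.smul_mem _ _ (weylMonomial_mem_lowerSpan ?_), wd_mul_weylMonomial i s⟩
  rw [Prod.lt_iff]
  refine Or.inr ⟨?_, lt_add_of_pos_left _ (Pi.single_pos.2 one_pos)⟩
  rw [Prod.fst_add, zero_add]
  exact tsub_le_self

theorem hasSymbol_weylMonomial (θ : WExp n) : HasSymbol (weylMonomial K θ) θ := by
  have hx := HasSymbol.list_prod (List.finRange n) fun i =>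
    (hasSymbol_wx (K := K) i).pow (θ.1 i)
  have hd := HasSymbol.list_prod (List.finRange n) fun i =>
    (hasSymbol_wd (K := K) i).pow (θ.2 i)
  have hθ : ((List.finRange n).map fun i => θ.1 i • ((Pi.single i 1, 0) : WExp n)).sum +
      ((List.finRange n).map fun i => θ.2 i • ((0, Pi.single i 1) : WExp n)).sum = θ := by
    rw [← Fin.sum_univ_def, ← Fin.sum_univ_def]
    ext j <;> simp [Prod.fst_sum, Prod.snd_sum, Finset.sum_apply, Pi.single_apply]
  have hmul := hx.mul hd
  rwa [hθ] at hmul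

end Symbols

section TermOrders

variable {n p m : ℕ} (B : Fin n → Fin p)

/-- The `j`-th order as an additive functional of the exponents. -/
def ordHom (j : Fin p) : WExp n →+ ℕ where
  toFun t := ordBlk B t.1 t.2 j
  map_zero' := by simp [ordBlk]
  map_add' s t := by
    simp only [ordBlk, Prod.fst_add, Prod.snd_add, Pi.add_apply, ← Finset.sum_add_distrib,
      add_add_add_comm]

/-- The exponent of `x_i`. -/
def xExp (i : Fin n) : WExp n →+ ℕ := (Pi.evalAddMonoidHom _ i).comp (AddMonoidHom.fst _ _)

/-- The exponent of `∂_i`. -/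
def dExp (i : Fin n) : WExp n →+ ℕ := (Pi.evalAddMonoidHom _ i).comp (AddMonoidHom.snd _ _)

/-- The functionals whose values are, in order, the entries of `keyList B j`. -/
def keyFunctionals (j : Fin p) : List (WExp n →+ ℕ) :=
  ordHom B j :: (((List.finRange p).filter fun k => k ≠ j).map (ordHom B) ++
    ((List.finRange n).filter fun i => B i = j).map xExp ++
    ((List.finRange n).filter fun i => B i = j).map dExp ++
    ((List.finRange n).filter fun i => B i ≠ j).flatMap fun i => [xExp i, dExp i])

theorem keyList_eq_map (j : Fin p) (t : WExp n) :
    keyList B j t = (keyFunctionals B j).map fun φ => φ t := by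
  simp only [keyList, keyFunctionals, List.map_cons, List.map_append, List.map_map,
    List.map_flatMap, List.cons_append, List.nil_append, ← List.flatMap_def, List.append_assoc]
  rfl

theorem mem_keyFunctionals (j : Fin p) (φ : WExp n →+ ℕ) :
    φ ∈ keyFunctionals B j ↔ (∃ k, ordHom B k = φ) ∨ ∃ i, xExp i = φ ∨ dExp i = φ := by
  simp only [keyFunctionals, List.mem_cons, List.mem_append, List.mem_map, List.mem_flatMap,
    List.mem_filter, List.mem_finRange, decide_eq_true_eq, true_and, List.not_mem_nil, or_false]
  grind

theorem keyList_injective (j : Fin p) : Function.Injective (keyList B j) := by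
  intro s t h
  rw [keyList_eq_map, keyList_eq_map, List.map_inj_left] at h
  exact Prod.ext (funext fun i => h _ ((mem_keyFunctionals B j _).2 (.inr ⟨i, .inl rfl⟩)))
    (funext fun i => h _ ((mem_keyFunctionals B j _).2 (.inr ⟨i, .inr rfl⟩)))

theorem monLt_add_left_iff {j : Fin p} (θ : WExp n) {s t : WExp n} :
    monLt B j (θ + s) (θ + t) ↔ monLt B j s t := by
  simp only [monLt, keyList_eq_map, lex_map_add_left_iff]

theorem monLt_of_lt (j : Fin p) {s t : WExp n} (h : s < t) : monLt B j s t := by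
  have hne := (keyList_injective B j).ne h.ne
  rw [monLt]
  rw [keyList_eq_map, keyList_eq_map] at hne ⊢
  exact lex_map_of_forall_le (fun φ _ => addMonoidHom_apply_le_of_le φ h.le) hne

variable {B}

theorem monLt.ordHom_le {j : Fin p} {s t : WExp n} (h : monLt B j s t) :
    ordHom B j s ≤ ordHom B j t := by
  simp only [monLt, keyList_eq_map, keyFunctionals, List.map_cons, List.cons_lex_cons_iff] at h
  exact h.elim le_of_lt fun h => h.1.le

variable (B)

/-- An order embedding of the terms with the order `<_j` into a linear order. -/
def termKey (j : Fin p) (t : WTerm n m) : List ℕ ×ₗ Fin m := toLex (keyList B j t.1, t.2)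

theorem termKey_injective (j : Fin p) : Function.Injective (termKey B j : WTerm n m → _) :=
  toLex.injective.comp ((keyList_injective B j).prodMap Function.injective_id)

variable {B}

theorem termLt_iff_termKey_lt {j : Fin p} {s t : WTerm n m} :
    termLt B j s t ↔ termKey B j s < termKey B j t := by
  rw [termKey, termKey, Prod.Lex.toLex_lt_toLex, (keyList_injective B j).eq_iff]
  rfl

instance termLt_isStrictOrder (j : Fin p) :
    IsStrictOrder (WTerm n m) (termLt B j) where
  irrefl _ h := lt_irrefl _ (termLt_iff_termKey_lt.1 h)
  trans _ _ _ h h' := termLt_iff_termKey_lt.2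
    ((termLt_iff_termKey_lt.1 h).trans (termLt_iff_termKey_lt.1 h'))

theorem exists_isLeader (j : Fin p) {K : Type} [Field K] {c : WTerm n m →₀ K} (hc : c ≠ 0) :
    ∃ u, IsLeader B j c u := by
  obtain ⟨u, hu, hmax⟩ := c.support.exists_max_image (termKey B j)
    (Finsupp.support_nonempty_iff.2 hc)
  exact ⟨u, hu, fun t ht hne =>
    termLt_iff_termKey_lt.2 ((hmax t ht).lt_of_ne ((termKey_injective B j).ne hne))⟩

theorem IsLeader.ordT_le {j : Fin p} {K : Type} [Field K] {c : WTerm n m →₀ K}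
    {u t : WTerm n m} (hu : IsLeader B j c u) (ht : t ∈ c.support) : ordT B j t ≤ ordT B j u := by
  obtain rfl | hne := eq_or_ne t u
  · exact le_rfl
  obtain hlt | heq := hu.2 t ht hne
  · exact hlt.ordHom_le
  · rw [ordT, ordT, heq.1]

/-- The product of a monomial and a term in the commutative monoid of exponents. -/
def mulTerm (θ : WExp n) (t : WTerm n m) : WTerm n m := (θ + t.1, t.2)

theorem ordT_mulTerm (j : Fin p) (θ : WExp n) (t : WTerm n m) :
    ordT B j (mulTerm θ t) = ordHom B j θ + ordT B j t :=
  map_add (ordHom B j) θ t.1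

theorem mulTerm_tquot {s t : WTerm n m} (h : tdvd s t) : mulTerm (tquot t s) s = t :=
  Prod.ext (Prod.ext (tsub_add_cancel_of_le h.2.1) (tsub_add_cancel_of_le h.2.2)) h.1

theorem termLt_mulTerm_iff {j : Fin p} (θ : WExp n) {s t : WTerm n m} :
    termLt B j (mulTerm θ s) (mulTerm θ t) ↔ termLt B j s t := by
  simp only [termLt, mulTerm, monLt_add_left_iff, add_right_inj]

variable (B)

/-- The terms `u` with `ord_j u ≤ r_j` for every `j`. -/
def boundedTerms (m : ℕ) (r : Fin p → ℕ) : Set (WTerm n m) := {u | ∀ j, ordT B j u ≤ r j}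

theorem finite_boundedTerms (r : Fin p → ℕ) : (boundedTerms B m r).Finite := by
  let R : Fin n → ℕ := fun i => r (B i)
  refine (((Set.finite_Iic R).prod (Set.finite_Iic R)).prod Set.finite_univ).subset fun u hu => ?_
  have hexp : ∀ i, u.1.1 i + u.1.2 i ≤ R i := fun i => by
    have hmem : i ∈ Finset.univ.filter fun k => B k = B i := by simp
    exact (Finset.single_le_sum (f := fun k => u.1.1 k + u.1.2 k) (fun _ _ => Nat.zero_le _)
      hmem).trans (hu (B i))
  exact ⟨⟨fun i => le_of_add_le_left (hexp i), fun i => le_of_add_le_right (hexp i)⟩,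
    Set.mem_univ _⟩

end TermOrders

section FreeModule

variable {n p m : ℕ} {K : Type} [Field K]

theorem linearIndependent_termVal [CharZero K] :
    LinearIndependent K (termVal K : WTerm n m → Fin m → WeylAlg n K) := by
  have hsingle := Pi.linearIndependent_single
    (fun _ : Fin m => (weylMonomial K : WExp n → WeylAlg n K))
    fun _ => linearIndependent_weylMonomial
  exact hsingle.comp (fun t : WTerm n m => (⟨t.2, t.1⟩ : Σ _ : Fin m, WExp n)) fun s t h => by
    grind

theorem exists_weylMonomial_smul_termVal_eq_add (θ : WExp n) (t : WTerm n m) :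
    ∃ x ∈ Submodule.span K (termVal K '' {s : WTerm n m | s.2 = t.2 ∧ s.1 < θ + t.1}),
      weylMonomial K θ • termVal K t = termVal K (mulTerm θ t) + x := by
  obtain ⟨x, hx, heq⟩ := hasSymbol_weylMonomial (K := K) θ t.1
  have hmap : Submodule.map (LinearMap.single K (fun _ : Fin m => WeylAlg n K) t.2)
      (lowerSpan K (θ + t.1)) ≤
      Submodule.span K (termVal K '' {s : WTerm n m | s.2 = t.2 ∧ s.1 < θ + t.1}) := by
    rw [lowerSpan, Submodule.map_span, Set.image_image]
    refine Submodule.span_mono ?_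
    rintro _ ⟨s, hs, rfl⟩
    exact ⟨(s, t.2), ⟨rfl, hs⟩, rfl⟩
  refine ⟨Pi.single t.2 x, hmap (Submodule.mem_map_of_mem hx), ?_⟩
  calc weylMonomial K θ • termVal K t
      = Pi.single t.2 (weylMonomial K θ * weylMonomial K t.1) := (Pi.single_smul _ _ _).symm
    _ = termVal K (mulTerm θ t) + Pi.single t.2 x := by rw [heq, Pi.single_add]; rfl

/-- The terms that can occur besides the `k`-th leader in the product of the monomial `θ` with an
element whose `j`-th leader is `u j`. -/
def tailTerms (B : Fin n → Fin p) (k : Fin p) (θ : WExp n) (u : Fin p → WTerm n m) :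
    Set (WTerm n m) :=
  {t | termLt B k t (mulTerm θ (u k)) ∧ ∀ j, ordT B j t ≤ ordHom B j θ + ordT B j (u j)}

variable {B : Fin n → Fin p} {k : Fin p} {c : WTerm n m →₀ K} {u : Fin p → WTerm n m}

theorem mem_tailTerms_of_lt (hlead : ∀ j, IsLeader B j c (u j)) {θ : WExp n} {s t : WTerm n m}
    (ht : t ∈ c.support) (hlt : s.1 < θ + t.1) : s ∈ tailTerms B k θ u := by
  have hst : ∀ j, termLt B j s (mulTerm θ t) := fun j => Or.inl (monLt_of_lt B j hlt)
  refine ⟨?_, fun j => ?_⟩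
  · obtain rfl | hne := eq_or_ne t (u k)
    · exact hst k
    · exact _root_.trans (hst k) ((termLt_mulTerm_iff θ).2 ((hlead k).2 t ht hne))
  · have hord := (monLt_of_lt B j hlt).ordHom_le
    rw [map_add] at hord
    exact hord.trans (Nat.add_le_add_left ((hlead j).ordT_le ht) _)

theorem mulTerm_mem_tailTerms (hlead : ∀ j, IsLeader B j c (u j)) {θ : WExp n} {t : WTerm n m}
    (ht : t ∈ c.support) (hne : t ≠ u k) : mulTerm θ t ∈ tailTerms B k θ u := by
  refine ⟨(termLt_mulTerm_iff θ).2 ((hlead k).2 t ht hne), fun j => ?_⟩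
  rw [ordT_mulTerm]
  exact Nat.add_le_add_left ((hlead j).ordT_le ht) _

theorem exists_weylMonomial_smul_eq_add {g : Fin m → WeylAlg n K} (hrep : Represents c g)
    (hlead : ∀ j, IsLeader B j c (u j)) (k : Fin p) (θ : WExp n) :
    ∃ x ∈ Submodule.span K (termVal K '' tailTerms B k θ u),
      weylMonomial K θ • g = c (u k) • termVal K (mulTerm θ (u k)) + x := by
  have hsmul : ∀ t ∈ c.support, ∃ x ∈ Submodule.span K (termVal K '' tailTerms B k θ u),
      weylMonomial K θ • termVal K t = termVal K (mulTerm θ t) + x := fun t ht => by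
    obtain ⟨x, hx, heq⟩ := exists_weylMonomial_smul_termVal_eq_add (K := K) θ t
    refine ⟨x, Submodule.span_mono (Set.image_mono ?_) hx, heq⟩
    exact fun s hs => mem_tailTerms_of_lt hlead ht hs.2
  choose! x hx heq using hsmul
  refine ⟨c (u k) • x (u k) +
    ∑ t ∈ c.support.erase (u k), c t • (termVal K (mulTerm θ t) + x t), ?_, ?_⟩
  · refine add_mem (Submodule.smul_mem _ _ (hx _ (hlead k).1))
      (Submodule.sum_mem _ fun t ht => Submodule.smul_mem _ _ ?_)
    obtain ⟨hne, ht⟩ := Finset.mem_erase.1 ht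
    exact add_mem (Submodule.subset_span ⟨_, mulTerm_mem_tailTerms hlead ht hne, rfl⟩) (hx t ht)
  · have hsum : weylMonomial K θ • g =
        ∑ t ∈ c.support, c t • (termVal K (mulTerm θ t) + x t) := by
      rw [hrep, Finsupp.sum, Finset.smul_sum]
      exact Finset.sum_congr rfl fun t ht => by rw [smul_comm, heq t ht]
    rw [hsum, ← Finset.add_sum_erase _ _ (hlead k).1, smul_add, add_assoc]

end FreeModule

section IrreducibleTerms

variable {n p m : ℕ} {ι : Type*} {B : Fin n → Fin p} {k : Fin p} {r : Fin p → ℕ}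
  {lead : ι → Fin p → WTerm n m}

/-- The bounded terms that are not the `k`-th leader of a multiple of some element with leaders
`lead i j` whose other leaders stay within the bounds `r`. If `k` is the first index and these are
the leaders of `G`, this is the set `U_{r_1,…,r_p}`. -/
def irreducibleTerms (B : Fin n → Fin p) (k : Fin p) (lead : ι → Fin p → WTerm n m)
    (r : Fin p → ℕ) : Set (WTerm n m) :=
  {t ∈ boundedTerms B m r | ∀ i, tdvd (lead i k) t →
    ∃ j, j ≠ k ∧ r j < ordHom B j (tquot t (lead i k)) + ordT B j (lead i j)}

theorem irreducibleTerms_eq_union (B : Fin n → Fin p) (k : Fin p) (lead : ι → Fin p → WTerm n m)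
    (r : Fin p → ℕ) :
    irreducibleTerms B k lead r =
      {t | (∀ j, ordT B j t ≤ r j) ∧ ∀ i, ¬ tdvd (lead i k) t} ∪
      {t | (∀ j, ordT B j t ≤ r j) ∧
        t ∉ {t | (∀ j, ordT B j t ≤ r j) ∧ ∀ i, ¬ tdvd (lead i k) t} ∧
        ∀ i, tdvd (lead i k) t → ∃ j, j ≠ k ∧ r j <
          ordBlk B (tquot t (lead i k)).1 (tquot t (lead i k)).2 j + ordT B j (lead i j)} := by
  ext t
  have hquot : ∀ i j, ordHom B j (tquot t (lead i k)) =
      ordBlk B (tquot t (lead i k)).1 (tquot t (lead i k)).2 j := fun _ _ => rfl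
  simp only [irreducibleTerms, boundedTerms, hquot, Set.mem_ofPred_eq, Set.mem_union]
  grind

theorem tailTerms_subset_boundedTerms {u : Fin p → WTerm n m} {t : WTerm n m}
    (ht : t ∈ boundedTerms B m r) (hdvd : tdvd (u k) t)
    (hle : ∀ j, j ≠ k → ordHom B j (tquot t (u k)) + ordT B j (u j) ≤ r j) :
    tailTerms B k (tquot t (u k)) u ⊆ boundedTerms B m r := by
  refine fun s hs j => (hs.2 j).trans ?_
  obtain rfl | hne := eq_or_ne j k
  · rw [← ordT_mulTerm, mulTerm_tquot hdvd]
    exact ht j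
  · exact hle j hne

theorem not_rhoDvd_of_mem_irreducibleTerms {hp : 0 < p} {u : Fin p → WTerm n m}
    (hmem : u ⟨0, hp⟩ ∈ irreducibleTerms B ⟨0, hp⟩ lead r) (hbdd : ∀ j, u j ∈ boundedTerms B m r)
    (i : ι) : ¬ rhoDvd B hp (lead i) u := by
  rintro ⟨hdvd, hord⟩
  obtain ⟨j, -, hlt⟩ := hmem.2 i hdvd
  have hquot := ordT_mulTerm (B := B) j (tquot (u ⟨0, hp⟩) (lead i ⟨0, hp⟩)) (lead i ⟨0, hp⟩)
  rw [mulTerm_tquot hdvd] at hquot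
  have hordj := hord j
  have hbddj := hbdd j j
  lia

end IrreducibleTerms

section Presentation

variable {n p m : ℕ} {K : Type} [Field K] {M : Type} [AddCommGroup M] [Module K M]
  [Module (WeylAlg n K) M] [IsScalarTower K (WeylAlg n K) M]

/-- The map `π : E → M`, `e_i ↦ f_i`, regarded as a `K`-linear map. -/
noncomputable def presentation (K : Type) [Field K] [Module K M] [Module (WeylAlg n K) M]
    [IsScalarTower K (WeylAlg n K) M] (f : Fin m → M) : (Fin m → WeylAlg n K) →ₗ[K] M :=
  (Fintype.linearCombination (WeylAlg n K) f).restrictScalars K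

theorem presentation_smul (f : Fin m → M) (D : WeylAlg n K) (v : Fin m → WeylAlg n K) :
    presentation K f (D • v) = D • presentation K f v :=
  map_smul (Fintype.linearCombination (WeylAlg n K) f) D v

theorem presentation_termVal (f : Fin m → M) (t : WTerm n m) :
    presentation K f (termVal K t) = wMono n K t.1.1 t.1.2 • f t.2 :=
  Fintype.linearCombination_apply_single (WeylAlg n K) f t.2 _

variable {ι : Type*} {B : Fin n → Fin p} {k : Fin p} {r : Fin p → ℕ} {f : Fin m → M}
  {g : ι → Fin m → WeylAlg n K} {c : ι → WTerm n m →₀ K} {lead : ι → Fin p → WTerm n m}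

theorem modFilB_eq_span (B : Fin n → Fin p) (r : Fin p → ℕ) (f : Fin m → M) :
    modFilB n p K B M m f (fun j => (r j : ℤ)) =
      Submodule.span K ((fun t => presentation K f (termVal K t)) '' boundedTerms B m r) := by
  refine le_antisymm (Submodule.span_le.2 ?_) (Submodule.span_le.2 ?_)
  · rintro _ ⟨i, D, hD, rfl⟩
    induction hD using Submodule.span_induction with
    | mem D hD =>
      obtain ⟨α, β, hord, rfl⟩ := hD
      exact Submodule.subset_span ⟨((α, β), i), fun j => Int.ofNat_le.1 (hord j),
        presentation_termVal f ((α, β), i)⟩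
    | zero => rw [zero_smul]; exact zero_mem _
    | add D D' _ _ hD hD' => rw [add_smul]; exact add_mem hD hD'
    | smul a D _ hD => rw [smul_assoc]; exact Submodule.smul_mem _ a hD
  · rintro _ ⟨t, ht, rfl⟩
    exact Submodule.subset_span ⟨t.2, _, Submodule.subset_span
      ⟨t.1.1, t.1.2, fun j => Int.ofNat_le.2 (ht j), rfl⟩, presentation_termVal f t⟩

theorem presentation_termVal_mem_span_of_tdvd {c : WTerm n m →₀ K} {g : Fin m → WeylAlg n K}
    {u : Fin p → WTerm n m} (hrep : Represents c g) (hlead : ∀ j, IsLeader B j c (u j))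
    (hker : presentation K f g = 0) {t : WTerm n m} (ht : t ∈ boundedTerms B m r)
    (hdvd : tdvd (u k) t)
    (hle : ∀ j, j ≠ k → ordHom B j (tquot t (u k)) + ordT B j (u j) ≤ r j) :
    presentation K f (termVal K t) ∈ Submodule.span K
      ((fun s => presentation K f (termVal K s)) '' {s ∈ boundedTerms B m r | termLt B k s t}) := by
  obtain ⟨x, hx, heq⟩ := exists_weylMonomial_smul_eq_add hrep hlead k (tquot t (u k))
  rw [mulTerm_tquot hdvd] at heq
  have hxmem := Submodule.mem_map_of_mem (f := presentation K f) hx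
  rw [Submodule.map_span, Set.image_image] at hxmem
  have hrel := congrArg (presentation K f) heq
  rw [presentation_smul, hker, smul_zero, map_add, map_smul] at hrel
  rw [← Submodule.smul_mem_iff _ (Finsupp.mem_support_iff.1 (hlead k).1),
    eq_neg_of_add_eq_zero_left hrel.symm]
  refine neg_mem (Submodule.span_mono (Set.image_mono fun s hs => ?_) hxmem)
  refine ⟨tailTerms_subset_boundedTerms ht hdvd hle hs, ?_⟩
  rw [← mulTerm_tquot hdvd]
  exact hs.1

theorem span_irreducibleTerms (hrep : ∀ i, Represents (c i) (g i))
    (hlead : ∀ i j, IsLeader B j (c i) (lead i j)) (hker : ∀ i, presentation K f (g i) = 0)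
    (k : Fin p) (r : Fin p → ℕ) :
    Submodule.span K
        ((fun t => presentation K f (termVal K t)) '' irreducibleTerms B k lead r) =
      Submodule.span K ((fun t => presentation K f (termVal K t)) '' boundedTerms B m r) := by
  refine le_antisymm (Submodule.span_mono (Set.image_mono fun t ht => ht.1))
    (Submodule.span_le.2 ?_)
  rintro _ ⟨t, ht, rfl⟩
  have hwf := (finite_boundedTerms (m := m) B r).wellFoundedOn (r := termLt B k)
  refine hwf.induction (P := fun t => presentation K f (termVal K t) ∈ Submodule.span K
    ((fun t => presentation K f (termVal K t)) '' irreducibleTerms B k lead r)) ht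
    fun t ht ih => ?_
  by_cases hirr : t ∈ irreducibleTerms B k lead r
  · exact Submodule.subset_span ⟨t, hirr, rfl⟩
  · obtain ⟨i, hdvd, hle⟩ : ∃ i, tdvd (lead i k) t ∧ ∀ j, j ≠ k →
        ordHom B j (tquot t (lead i k)) + ordT B j (lead i j) ≤ r j := by
      by_contra! hno
      exact hirr ⟨ht, hno⟩
    refine Submodule.span_le.2 ?_ (presentation_termVal_mem_span_of_tdvd (hrep i) (hlead i)
      (hker i) ht hdvd hle)
    rintro _ ⟨s, hs, rfl⟩
    exact ih s hs.1 hs.2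

/-- The Gröbner basis property of a family with leaders `lead i j`: the leaders of every nonzero
`v` in the kernel of `π` are divisible, in the sense of `rhoDvd`, by those of some member. -/
def GroebnerCondition (K : Type) [Field K] [Module (WeylAlg n K) M] (B : Fin n → Fin p)
    (hp : 0 < p) (f : Fin m → M) (lead : ι → Fin p → WTerm n m) : Prop :=
  ∀ v : Fin m → WeylAlg n K, (∑ j, v j • f j) = 0 → v ≠ 0 →
    ∀ (c : WTerm n m →₀ K) (u : Fin p → WTerm n m),
      Represents c v → (∀ j, IsLeader B j c (u j)) → ∃ i, rhoDvd B hp (lead i) u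

theorem presentation_ne_zero_of_mem_span_irreducibleTerms {hp : 0 < p}
    (hGB : GroebnerCondition K B hp f lead) {v : Fin m → WeylAlg n K}
    (hv : v ∈ Submodule.span K (termVal K '' irreducibleTerms B ⟨0, hp⟩ lead r)) (hne : v ≠ 0) :
    presentation K f v ≠ 0 := by
  intro hker
  obtain ⟨c, hsupp, hrep⟩ := (Finsupp.mem_span_image_iff_linearCombination K).1 hv
  have hc : c ≠ 0 := by
    rintro rfl
    exact hne (hrep.symm.trans (map_zero _))
  choose u hu using fun j => exists_isLeader (B := B) j hc
  have hmem : ∀ j, u j ∈ irreducibleTerms B ⟨0, hp⟩ lead r := fun j => hsupp (hu j).1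
  obtain ⟨i, hi⟩ := hGB v hker hne c u hrep.symm hu
  exact not_rhoDvd_of_mem_irreducibleTerms (hmem _) (fun j => (hmem j).1) i hi

theorem linearIndepOn_irreducibleTerms [CharZero K] {hp : 0 < p}
    (hGB : GroebnerCondition K B hp f lead) (r : Fin p → ℕ) :
    LinearIndepOn K (fun t => presentation K f (termVal K t))
      (irreducibleTerms B ⟨0, hp⟩ lead r) :=
  linearIndepOn_map_of_forall_mem_span linearIndependent_termVal (presentation K f)
    fun _ => presentation_ne_zero_of_mem_span_irreducibleTerms hGB

end Presentation

theorem statement_16_general {ι : Type*} (n p m : ℕ) (hp : 0 < p) (K : Type) [Field K]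
    [CharZero K] (B : Fin n → Fin p) (M : Type) [AddCommGroup M] [Module K M]
    [Module (WeylAlg n K) M] [IsScalarTower K (WeylAlg n K) M] (f : Fin m → M)
    (g : ι → Fin m → WeylAlg n K) (hker : ∀ i, ∑ j, g i j • f j = 0)
    (cg : ι → (WTerm n m →₀ K)) (ug : ι → Fin p → WTerm n m)
    (hrep : ∀ i, Represents (cg i) (g i))
    (hlead : ∀ i j, IsLeader B j (cg i) (ug i j))
    (hGB : GroebnerCondition K B hp f ug) (r : Fin p → ℕ) :
    LinearIndepOn K (fun u : WTerm n m => wMono n K u.1.1 u.1.2 • f u.2)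
      (irreducibleTerms B ⟨0, hp⟩ ug r) ∧
    Submodule.span K ((fun u : WTerm n m => wMono n K u.1.1 u.1.2 • f u.2) ''
      irreducibleTerms B ⟨0, hp⟩ ug r) = modFilB n p K B M m f (fun j => (r j : ℤ)) := by
  simp only [← presentation_termVal]
  exact ⟨linearIndepOn_irreducibleTerms hGB r,
    (span_irreducibleTerms hrep hlead hker ⟨0, hp⟩ r).trans (modFilB_eq_span B r f).symm⟩

theorem statement_16 (n p m d : ℕ) (hp : 0 < p) (K : Type) [Field K] [CharZero K]
    (nn : Fin p → ℕ) (hn : ∑ j, nn j = n)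
    (B : Fin n → Fin p) (hBmono : Monotone B)
    (hBcard : ∀ j, (Finset.univ.filter fun i => B i = j).card = nn j)
    (M : Type) [AddCommGroup M] [Module K M] [Module (WeylAlg n K) M]
    [IsScalarTower K (WeylAlg n K) M]
    (f : Fin m → M) (hgen : Submodule.span (WeylAlg n K) (Set.range f) = ⊤)
    (g : Fin d → Fin m → WeylAlg n K) (hg0 : ∀ i, g i ≠ 0)
    (hker : ∀ i, ∑ j, g i j • f j = 0)
    (cg : Fin d → (WTerm n m →₀ K)) (ug : Fin d → Fin p → WTerm n m)
    (hrep : ∀ i, Represents (cg i) (g i))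
    (hlead : ∀ i j, IsLeader B j (cg i) (ug i j))
    (hGB : ∀ v : Fin m → WeylAlg n K, (∑ j, v j • f j) = 0 → v ≠ 0 →
      ∀ (cf : WTerm n m →₀ K) (uf : Fin p → WTerm n m),
        Represents cf v → (∀ j, IsLeader B j cf (uf j)) →
        ∃ i, rhoDvd B hp (ug i) uf)
    (r : Fin p → ℕ)
    (V V' U : Set (WTerm n m))
    (hV : V = {u | (∀ j, ordT B j u ≤ r j) ∧ ∀ i, ¬ tdvd (ug i ⟨0, hp⟩) u})
    (hV' : V' = {u | (∀ j, ordT B j u ≤ r j) ∧ u ∉ V ∧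
      ∀ i, tdvd (ug i ⟨0, hp⟩) u →
        ∃ j, j ≠ (⟨0, hp⟩ : Fin p) ∧
          r j < ordBlk B (tquot u (ug i ⟨0, hp⟩)).1 (tquot u (ug i ⟨0, hp⟩)).2 j +
            ordT B j (ug i j)})
    (hU : U = V ∪ V') :
    LinearIndependent K
      (fun x : ((fun u : WTerm n m => wMono n K u.1.1 u.1.2 • f u.2) '' U) => (x : M)) ∧
    Submodule.span K ((fun u : WTerm n m => wMono n K u.1.1 u.1.2 • f u.2) '' U) =
      modFilB n p K B M m f (fun j => (r j : ℤ)) := by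
  have hirr : U = irreducibleTerms B ⟨0, hp⟩ ug r := by
    rw [hU, hV', hV, irreducibleTerms_eq_union]
  obtain ⟨hindep, hspan⟩ := statement_16_general n p m hp K B M f g hker cg ug hrep hlead hGB r
  rw [hirr]
  exact ⟨hindep.id_image, hspan⟩
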